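/- arXiv:2504.04163 — 6 statements merged into one kernel-verified Lean document; each statement's English description precedes it below -/
import Mathlib

section
/- Let X be a nonempty irreducible topological space and let 𝒫 be a finite collection of pairwise disjoint nonempty locally closed subsets of X whose union is all of X. Then exactly one member of 𝒫 is an open subset of X, and this unique open member is dense in X. -/
/-!
The closures of the members of the partition form a finite closed cover of the irreducible
space `X`, so some member is dense. A dense locally closed set `U ∩ Z` has `Z = X`, hence equals
the open set `U`. Nonempty open sets in an irreducible space are dense and meet each other, so
disjointness leaves room for only one open member.
-/

/-- If a nonempty irreducible topological space `X` is partitioned into finitely many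
pairwise disjoint nonempty locally closed subsets, then exactly one member of the
partition is open, and the unique open member is dense. -/
theorem stmt0 {X : Type*} [TopologicalSpace X] [IrreducibleSpace X]
    (P : Finset (Set X))
    (hne : ∀ S ∈ P, S.Nonempty)
    (hlc : ∀ S ∈ P, IsLocallyClosed S)
    (hdisj : (P : Set (Set X)).PairwiseDisjoint id)
    (hcover : ⋃₀ (P : Set (Set X)) = Set.univ) :
    (∃! S : Set X, S ∈ P ∧ IsOpen S) ∧ (∀ S ∈ P, IsOpen S → Dense S) := by
  classical
  have hex : ∃ S ∈ P, Dense S := by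
    obtain ⟨z, hz, hzu⟩ := isIrreducible_iff_sUnion_isClosed.1
      (IrreducibleSpace.isIrreducible_univ X) (P.image closure)
      (by simp)
      (by
        intro x _
        obtain ⟨S, hS, hxS⟩ := hcover.symm ▸ Set.mem_univ x
        exact ⟨closure S, by simpa using ⟨S, hS, rfl⟩, subset_closure hxS⟩)
    obtain ⟨S, hS, rfl⟩ := Finset.mem_image.1 hz
    exact ⟨S, hS, fun x => hzu (Set.mem_univ x)⟩
  obtain ⟨S, hS, hdense⟩ := hex
  have hopen : IsOpen S := by
    obtain ⟨U, Z, hU, hZ, rfl⟩ := hlc S hS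
    have hZ' : Z = Set.univ := by
      rw [← hZ.closure_eq]
      exact (hdense.mono Set.inter_subset_right).closure_eq
    simpa [hZ'] using hU
  refine ⟨⟨S, ⟨hS, hopen⟩, ?_⟩, fun T hT hTo => hTo.dense (hne T hT)⟩
  rintro T ⟨hT, hTo⟩
  by_contra hTS
  exact Set.not_disjoint_iff_nonempty_inter.2
    (nonempty_preirreducible_inter hTo hopen (hne T hT) (hne S hS)) (hdisj hT hS hTS)
end

section
/- Let V be a finite-dimensional vector space over ℂ, let f : V → V be a linear endomorphism, let u : V → V be an invertible linear endomorphism, and let c ∈ ℂ satisfy c^k ≠ 1 for every integer k ≥ 1. If u ∘ f ∘ u⁻¹ = c • f, then f is nilpotent. -/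
/-!
If `f v = μ v`, the relation `f ∘ u⁻¹ = c • (u⁻¹ ∘ f)` makes `u⁻¹ v` an eigenvector of `f` for
`c μ`, so every `c ^ k μ` is an eigenvalue. When `c ≠ 0` is not a root of unity and `μ ≠ 0`, these
are infinitely many, which is impossible in finite dimension. Hence `0` is the only eigenvalue, and
over `ℂ` the characteristic polynomial is a power of `X`, so `f` is nilpotent by Cayley–Hamilton.
The case `c = 0` is immediate, since then `f = 0`.
-/

/-- Over an algebraically closed field, an endomorphism without nonzero eigenvalues is nilpotent. -/
lemma isNilpotent_of_eigenvalues_eq_zero {K V : Type*} [Field K] [IsAlgClosed K]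
    [AddCommGroup V] [Module K V] [FiniteDimensional K V] (f : Module.End K V)
    (hf : ∀ μ, f.HasEigenvalue μ → μ = 0) : IsNilpotent f := by
  have hroots : f.charpoly.roots = Multiset.replicate f.charpoly.roots.card 0 :=
    Multiset.eq_replicate_card.2 fun μ hμ =>
      hf μ ((Module.End.hasEigenvalue_iff_isRoot_charpoly f μ).2 (Polynomial.isRoot_of_mem_roots hμ))
  have hprod := (IsAlgClosed.splits f.charpoly).eq_prod_roots_of_monic f.charpoly_monic
  rw [hroots] at hprod
  have hCH := f.aeval_self_charpoly
  rw [hprod] at hCH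
  exact ⟨f.charpoly.roots.card, by simpa using hCH⟩

/-- Let `V` be a finite-dimensional complex vector space, `f : V → V` linear,
`u : V ≃ V` an invertible linear endomorphism, and `c ∈ ℂ` with `c ^ k ≠ 1` for all
integers `k ≥ 1`.  If `u ∘ f ∘ u⁻¹ = c • f`, then `f` is nilpotent. -/
theorem stmt2 {V : Type*} [AddCommGroup V] [Module ℂ V] [FiniteDimensional ℂ V]
    (f : V →ₗ[ℂ] V) (u : V ≃ₗ[ℂ] V) (c : ℂ)
    (hc : ∀ k : ℕ, 1 ≤ k → c ^ k ≠ 1)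
    (h : u.toLinearMap ∘ₗ f ∘ₗ u.symm.toLinearMap = c • f) :
    IsNilpotent f := by
  have hcomm : ∀ v, f (u.symm v) = c • u.symm (f v) := fun v => by
    have hv : u (f (u.symm v)) = c • f v := LinearMap.congr_fun h v
    rw [← map_smul, ← hv, u.symm_apply_apply]
  rcases eq_or_ne c 0 with rfl | hc0
  · have hf0 : f = 0 := by
      ext v
      simpa using hcomm (u v)
    rw [hf0]
    exact IsNilpotent.zero
  refine isNilpotent_of_eigenvalues_eq_zero f fun μ hμ => ?_
  by_contra hμ0
  have hstep : ∀ ν, Module.End.HasEigenvalue f ν → Module.End.HasEigenvalue f (c * ν) := by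
    intro ν hν
    obtain ⟨v, hv⟩ := hν.exists_hasEigenvector
    refine Module.End.hasEigenvalue_of_hasEigenvector (x := u.symm v)
      (Module.End.hasEigenvector_iff.2 ⟨Module.End.mem_eigenspace_iff.2 ?_, ?_⟩)
    · rw [hcomm, hv.apply_eq_smul, map_smul, smul_smul]
    · simpa using hv.2
  have hpow : ∀ k : ℕ, Module.End.HasEigenvalue f (c ^ k * μ) := by
    intro k
    induction k with
    | zero => simpa using hμ
    | succ k ih =>
      have := hstep _ ih
      rwa [← mul_assoc, ← pow_succ'] at this
  have hinj : Function.Injective fun k : ℕ => c ^ k * μ := by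
    have key : ∀ i j : ℕ, i < j → c ^ i * μ ≠ c ^ j * μ := by
      intro i j hij he
      have he' : c ^ i = c ^ j := mul_right_cancel₀ hμ0 he
      apply hc (j - i) (by omega)
      apply mul_left_cancel₀ (pow_ne_zero i hc0)
      rw [← pow_add, Nat.add_sub_cancel' hij.le, he', mul_one]
    intro i j hij
    rcases lt_trichotomy i j with hlt | heq | hlt
    · exact absurd hij (key i j hlt)
    · exact heq
    · exact absurd hij.symm (key j i hlt)
  exact Set.infinite_of_injective_forall_mem hinj hpow
    (Module.End.finite_hasEigenvalue f)
end

section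
/- Let ι and κ be finite types, let X ⊆ (ι → ℂ) and Y ⊆ (κ → ℂ) be nonempty subsets, and let x ∈ X and y ∈ Y. Identify the coordinate space ((ι ⊕ κ) → ℂ) with (ι → ℂ) × (κ → ℂ). Then the ℂ-linear span of the set of gradients {∇g(x, y) : g a polynomial in the variables ι ⊕ κ vanishing identically on X × Y} equals the product of the ℂ-linear span of {∇p(x) : p a polynomial in the variables ι vanishing identically on X} with the ℂ-linear span of {∇q(y) : q a polynomial in the variables κ vanishing identically on Y}. -/
/-!
Freezing the second block of variables of `g` at `y` gives the polynomial `p = g(·, y)` in the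
variables `ι`. If `g` vanishes on `X × Y` then `p` vanishes on `X`, because `y ∈ Y`, and `∇p(x)` is
the `ι`-block of `∇g(x, y)`. With the roles of the factors exchanged, this puts every `∇g(x, y)` in
the product of the two spans. Conversely, a polynomial vanishing on one factor, regarded as a
polynomial in `ι ⊕ κ`, vanishes on `X × Y`, and its gradient there is the original one extended by
zero. The first inclusion rests on `polyGrad_eq_sumElim_freeze`, the second on `polyGrad_rename_inl`
and `polyGrad_rename_inr`.
-/

open MvPolynomial

/-- The gradient of a multivariable polynomial at a point: the vector of partial
derivatives evaluated at that point. -/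
noncomputable def polyGrad {σ : Type*} (p : MvPolynomial σ ℂ) (x : σ → ℂ) : σ → ℂ :=
  fun i => eval x (pderiv i p)

/-- The linear identification of `(ι → ℂ) × (κ → ℂ)` with `(ι ⊕ κ) → ℂ`. -/
def sumElimLinear (ι κ : Type*) : ((ι → ℂ) × (κ → ℂ)) →ₗ[ℂ] ((ι ⊕ κ) → ℂ) where
  toFun p := Sum.elim p.1 p.2
  map_add' p q := by funext s; cases s <;> rfl
  map_smul' a p := by funext s; cases s <;> rfl

/-- Chain rule for a substitution `f` in which only `f j` depends on the variable `i`, and does so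
with derivative `1`. -/
lemma pderiv_aeval_of_single {σ τ : Type*} [DecidableEq σ] (f : σ → MvPolynomial τ ℂ) (i : τ)
    (j : σ) (hf : ∀ s, pderiv i (f s) = Pi.single (M := fun _ => MvPolynomial τ ℂ) j 1 s)
    (g : MvPolynomial σ ℂ) : pderiv i (aeval f g) = aeval f (pderiv j g) := by
  induction g using MvPolynomial.induction_on with
  | C a => simp [algebraMap_eq]
  | add p q hp hq => simp only [map_add, hp, hq]
  | mul_X p s hp =>
    simp only [map_mul, aeval_X, Derivation.leibniz, hp, hf, smul_eq_mul, map_add, pderiv_X]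
    by_cases h : s = j
    · subst h; simp
    · simp [Pi.single_eq_of_ne h]

lemma pderiv_rename_of_notMem_range {σ τ : Type*} (f : σ → τ) (i : τ) (hf : ∀ s, f s ≠ i)
    (g : MvPolynomial σ ℂ) : pderiv i (rename f g) = 0 := by
  induction g using MvPolynomial.induction_on with
  | C a => simp
  | add p q hp hq => simp [hp, hq]
  | mul_X p s hp => simp [hp, pderiv_X_of_ne (hf s)]

lemma eval_rename_comp {σ τ : Type*} (f : σ → τ) (z : τ → ℂ) (p : MvPolynomial σ ℂ) :
    eval z (rename f p) = eval (z ∘ f) p := by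
  rw [eval_rename]

lemma eval_aeval_comp {σ τ : Type*} (f : σ → MvPolynomial τ ℂ) (z : τ → ℂ)
    (g : MvPolynomial σ ℂ) : eval z (aeval f g) = eval (fun s => eval z (f s)) g := by
  induction g using MvPolynomial.induction_on with
  | C a => simp [algebraMap_eq]
  | add p q hp hq => simp only [map_add, hp, hq]
  | mul_X p s hp => simp only [map_mul, aeval_X, eval_X, hp]

lemma polyGrad_rename_inl {ι κ : Type*} (p : MvPolynomial ι ℂ) (x : ι → ℂ) (y : κ → ℂ) :
    polyGrad (rename Sum.inl p) (Sum.elim x y) = Sum.elim (polyGrad p x) 0 := by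
  funext s
  rcases s with i | k
  · simp [polyGrad, pderiv_rename Sum.inl_injective, eval_rename_comp]
  · simp [polyGrad, pderiv_rename_of_notMem_range]

lemma polyGrad_rename_inr {ι κ : Type*} (q : MvPolynomial κ ℂ) (x : ι → ℂ) (y : κ → ℂ) :
    polyGrad (rename Sum.inr q) (Sum.elim x y) = Sum.elim (0 : ι → ℂ) (polyGrad q y) := by
  funext s
  rcases s with i | k
  · simp [polyGrad, pderiv_rename_of_notMem_range]
  · simp [polyGrad, pderiv_rename Sum.inr_injective, eval_rename_comp]

/-- The polynomial `g(·, y)`. -/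
noncomputable def freezeRight {ι κ : Type*} (y : κ → ℂ) (g : MvPolynomial (ι ⊕ κ) ℂ) :
    MvPolynomial ι ℂ :=
  aeval (Sum.elim X fun k => C (y k)) g

/-- The polynomial `g(x, ·)`. -/
noncomputable def freezeLeft {ι κ : Type*} (x : ι → ℂ) (g : MvPolynomial (ι ⊕ κ) ℂ) :
    MvPolynomial κ ℂ :=
  aeval (Sum.elim (fun i => C (x i)) X) g

lemma eval_freezeRight_aux {ι κ : Type*} (x : ι → ℂ) (y : κ → ℂ) :
    (fun s => eval x ((Sum.elim X fun k => C (y k) : ι ⊕ κ → MvPolynomial ι ℂ) s)) =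
      Sum.elim x y := by
  funext s; cases s <;> simp

lemma eval_freezeLeft_aux {ι κ : Type*} (x : ι → ℂ) (y : κ → ℂ) :
    (fun s => eval y ((Sum.elim (fun i => C (x i)) X : ι ⊕ κ → MvPolynomial κ ℂ) s)) =
      Sum.elim x y := by
  funext s; cases s <;> simp

lemma eval_freezeRight {ι κ : Type*} (x : ι → ℂ) (y : κ → ℂ) (g : MvPolynomial (ι ⊕ κ) ℂ) :
    eval x (freezeRight y g) = eval (Sum.elim x y) g := by
  rw [freezeRight, eval_aeval_comp, eval_freezeRight_aux]

lemma eval_freezeLeft {ι κ : Type*} (x : ι → ℂ) (y : κ → ℂ) (g : MvPolynomial (ι ⊕ κ) ℂ) :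
    eval y (freezeLeft x g) = eval (Sum.elim x y) g := by
  rw [freezeLeft, eval_aeval_comp, eval_freezeLeft_aux]

lemma polyGrad_eq_sumElim_freeze {ι κ : Type*} (x : ι → ℂ) (y : κ → ℂ)
    (g : MvPolynomial (ι ⊕ κ) ℂ) :
    polyGrad g (Sum.elim x y) =
      Sum.elim (polyGrad (freezeRight y g) x) (polyGrad (freezeLeft x g) y) := by
  classical
  funext s
  rcases s with i | k
  · simp only [polyGrad, Sum.elim_inl]
    rw [freezeRight, pderiv_aeval_of_single _ i (Sum.inl i), eval_aeval_comp,
      eval_freezeRight_aux]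
    rintro (s | s) <;> simp [pderiv_X, Pi.single_apply, eq_comm]
  · simp only [polyGrad, Sum.elim_inr]
    rw [freezeLeft, pderiv_aeval_of_single _ k (Sum.inr k), eval_aeval_comp,
      eval_freezeLeft_aux]
    rintro (s | s) <;> simp [pderiv_X, Pi.single_apply, eq_comm]

/-- For nonempty subsets `X ⊆ ℂ^ι`, `Y ⊆ ℂ^κ` and points `x ∈ X`, `y ∈ Y`, the span of the
gradients at `(x, y)` of polynomials vanishing on `X × Y` is the product of the span of the
gradients at `x` of polynomials vanishing on `X` with the span of the gradients at `y` of
polynomials vanishing on `Y`. -/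
theorem stmt3 {ι κ : Type*} [Fintype ι] [Fintype κ]
    (X : Set (ι → ℂ)) (Y : Set (κ → ℂ)) (hX : X.Nonempty) (hY : Y.Nonempty)
    (x : ι → ℂ) (y : κ → ℂ) (hx : x ∈ X) (hy : y ∈ Y) :
    Submodule.span ℂ {v : (ι ⊕ κ) → ℂ |
        ∃ g : MvPolynomial (ι ⊕ κ) ℂ,
          (∀ a ∈ X, ∀ b ∈ Y, eval (Sum.elim a b) g = 0) ∧
          v = polyGrad g (Sum.elim x y)} =
      Submodule.map (sumElimLinear ι κ)
        ((Submodule.span ℂ {v : ι → ℂ | ∃ p : MvPolynomial ι ℂ,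
            (∀ a ∈ X, eval a p = 0) ∧ v = polyGrad p x}).prod
          (Submodule.span ℂ {w : κ → ℂ | ∃ q : MvPolynomial κ ℂ,
            (∀ b ∈ Y, eval b q = 0) ∧ w = polyGrad q y})) := by
  apply le_antisymm
  · rw [Submodule.span_le]
    rintro _ ⟨g, hg, rfl⟩
    refine ⟨(polyGrad (freezeRight y g) x, polyGrad (freezeLeft x g) y), ⟨?_, ?_⟩,
      (polyGrad_eq_sumElim_freeze x y g).symm⟩
    · exact Submodule.subset_span
        ⟨_, fun a ha => (eval_freezeRight a y g).trans (hg a ha y hy), rfl⟩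
    · exact Submodule.subset_span
        ⟨_, fun b hb => (eval_freezeLeft x b g).trans (hg x hx b hb), rfl⟩
  · rw [LinearMap.prod_eq_sup_map, Submodule.map_sup, ← Submodule.map_comp,
      ← Submodule.map_comp, sup_le_iff, Submodule.map_span_le, Submodule.map_span_le]
    constructor
    · rintro _ ⟨p, hp, rfl⟩
      refine Submodule.subset_span ⟨rename Sum.inl p, fun a ha b _ => ?_,
        (polyGrad_rename_inl p x y).symm⟩
      simpa [eval_rename_comp] using hp a ha
    · rintro _ ⟨q, hq, rfl⟩
      refine Submodule.subset_span ⟨rename Sum.inr q, fun a _ b hb => ?_,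
        (polyGrad_rename_inr q x y).symm⟩
      simpa [eval_rename_comp] using hq b hb
end

section
/- Let ι be a finite type, let X ⊆ (ι → ℂ) and Y ⊆ (ι → ℂ) be nonempty subsets, and let x ∈ X and ξ ∈ Y. Let f be the pairing polynomial in the variables ι ⊕ ι given by f = Σ_{i ∈ ι} X_i · Ξ_i (the product of the i-th variable from the first copy with the i-th variable from the second copy). Then, identifying ((ι ⊕ ι) → ℂ) with (ι → ℂ) × (ι → ℂ): (a) the gradient of f at (x, ξ) equals (ξ, x); and (b) (ξ, x) lies in the ℂ-linear span of {∇g(x, ξ) : g a polynomial vanishing identically on X × Y} if and only if ξ lies in the span of {∇p(x) : p vanishing identically on X} and x lies in the span of {∇q(ξ) : q vanishing identically on Y}. -/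
/-!
Write `N_X(x)` for the span of the gradients at `x` of the polynomials vanishing on `X`. The proof
of (b) shows `N_{X × Y}(x, ξ) = N_X(x) × N_Y(ξ)`, in the form needed for the vector `(ξ, x)`.

If `g` vanishes on `X × Y`, then the slices `g(·, ξ)` and `g(x, ·)` vanish on `X` and on `Y`, because
`ξ ∈ Y` and `x ∈ X`, and their gradients are the two components of `∇g(x, ξ)`
(`eval_pderiv_bind₁`). Conversely, a polynomial vanishing on `X` or on `Y`, read as a polynomial in
both groups of variables, vanishes on `X × Y`, and its gradient is the old one extended by zero
(`polyGrad_rename_inl`, `polyGrad_rename_inr`).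
-/

open MvPolynomial

lemma eval_bind₁_of_eval {σ τ : Type*} (φ : τ → MvPolynomial σ ℂ) (p : MvPolynomial τ ℂ)
    (x : σ → ℂ) (y : τ → ℂ) (hy : ∀ t, eval x (φ t) = y t) :
    eval x (bind₁ φ p) = eval y p := by
  induction p using MvPolynomial.induction_on with
  | C a => simp
  | add p q hp hq => simp [hp, hq]
  | mul_X p t hp => simp [hp, hy]

/-- The chain rule for a substitution `φ` in which only `φ j` depends on the variable `i`, and does
so with derivative `1`. -/
lemma eval_pderiv_bind₁ {σ τ : Type*} [DecidableEq τ] (φ : τ → MvPolynomial σ ℂ) (i : σ) (j : τ)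
    (hφ : ∀ t, pderiv i (φ t) = Pi.single (M := fun _ => MvPolynomial σ ℂ) j 1 t)
    (g : MvPolynomial τ ℂ) (x : σ → ℂ) (y : τ → ℂ) (hy : ∀ t, eval x (φ t) = y t) :
    eval x (pderiv i (bind₁ φ g)) = eval y (pderiv j g) := by
  induction g using MvPolynomial.induction_on with
  | C a => simp
  | add p q hp hq => simp [hp, hq]
  | mul_X p t hp =>
    have hs : eval x (Pi.single (M := fun _ => MvPolynomial σ ℂ) j 1 t)
        = eval y (Pi.single (M := fun _ => MvPolynomial τ ℂ) j 1 t) := by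
      by_cases h : t = j
      · subst h; simp
      · simp [h]
    simp [Derivation.leibniz, pderiv_X, hp, hφ, hy, eval_bind₁_of_eval φ p x y hy, hs]

/-- Jacobian criterion computation for the canonical pairing.  Let `f = Σ_i X_i·Ξ_i` be the
pairing polynomial in the variables `ι ⊕ ι`.  Then (a) the gradient of `f` at `(x, ξ)` is
`(ξ, x)`; and (b) `(ξ, x)` lies in the span of the gradients at `(x, ξ)` of the polynomials
vanishing on `X × Y` if and only if `ξ` lies in the span of the gradients at `x` of the
polynomials vanishing on `X` and `x` lies in the span of the gradients at `ξ` of the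
polynomials vanishing on `Y`. -/
theorem stmt4 {ι : Type*} [Fintype ι]
    (X Y : Set (ι → ℂ)) (hX : X.Nonempty) (hY : Y.Nonempty)
    (x ξ : ι → ℂ) (hx : x ∈ X) (hξ : ξ ∈ Y) :
    polyGrad (∑ i : ι, MvPolynomial.X (Sum.inl i) * MvPolynomial.X (Sum.inr i))
        (Sum.elim x ξ) = Sum.elim ξ x ∧
    ((Sum.elim ξ x ∈ Submodule.span ℂ {v : (ι ⊕ ι) → ℂ |
        ∃ g : MvPolynomial (ι ⊕ ι) ℂ,
          (∀ a ∈ X, ∀ b ∈ Y, eval (Sum.elim a b) g = 0) ∧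
          v = polyGrad g (Sum.elim x ξ)}) ↔
      (ξ ∈ Submodule.span ℂ {v : ι → ℂ | ∃ p : MvPolynomial ι ℂ,
            (∀ a ∈ X, eval a p = 0) ∧ v = polyGrad p x} ∧
       x ∈ Submodule.span ℂ {w : ι → ℂ | ∃ q : MvPolynomial ι ℂ,
            (∀ b ∈ Y, eval b q = 0) ∧ w = polyGrad q ξ})) := by
  classical
  refine ⟨?_, ?_, ?_⟩
  · funext s
    rcases s with i | i <;>
      simp [polyGrad, Derivation.leibniz, pderiv_X, Pi.single_apply, apply_ite]
  · intro h
    constructor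
    · have h' := Submodule.mem_map_of_mem (f := LinearMap.funLeft ℂ ℂ (Sum.inl : ι → ι ⊕ ι)) h
      rw [Submodule.map_span] at h'
      refine Submodule.span_mono ?_ h'
      rintro _ ⟨_, ⟨g, hg, rfl⟩, rfl⟩
      -- The slice `g(·, ξ)`.
      have hs : ∀ a t, eval a (Sum.elim MvPolynomial.X (fun k => C (ξ k)) t :
          MvPolynomial ι ℂ) = Sum.elim a ξ t := by
        rintro a (t | t) <;> simp
      refine ⟨bind₁ (Sum.elim MvPolynomial.X fun k => C (ξ k)) g, fun a ha => ?_, ?_⟩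
      · rw [eval_bind₁_of_eval _ g a _ (hs a), hg a ha ξ hξ]
      · funext i
        refine (eval_pderiv_bind₁ _ i (Sum.inl i) ?_ g x _ (hs x)).symm
        rintro (t | t) <;> simp [pderiv_X, Pi.single_apply, eq_comm]
    · have h' := Submodule.mem_map_of_mem (f := LinearMap.funLeft ℂ ℂ (Sum.inr : ι → ι ⊕ ι)) h
      rw [Submodule.map_span] at h'
      refine Submodule.span_mono ?_ h'
      rintro _ ⟨_, ⟨g, hg, rfl⟩, rfl⟩
      -- The slice `g(x, ·)`.
      have hs : ∀ b t, eval b (Sum.elim (fun k => C (x k)) MvPolynomial.X t :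
          MvPolynomial ι ℂ) = Sum.elim x b t := by
        rintro b (t | t) <;> simp
      refine ⟨bind₁ (Sum.elim (fun k => C (x k)) MvPolynomial.X) g, fun b hb => ?_, ?_⟩
      · rw [eval_bind₁_of_eval _ g b _ (hs b), hg x hx b hb]
      · funext i
        refine (eval_pderiv_bind₁ _ i (Sum.inr i) ?_ g ξ _ (hs ξ)).symm
        rintro (t | t) <;> simp [pderiv_X, Pi.single_apply, eq_comm]
  · rintro ⟨h₁, h₂⟩
    have e : (Sum.elim ξ x : ι ⊕ ι → ℂ) = Sum.elim ξ 0 + Sum.elim (0 : ι → ℂ) x := by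
      funext s
      rcases s with i | i <;> simp
    rw [e]
    let E := (LinearEquiv.sumArrowLequivProdArrow ι ι ℂ ℂ).symm.toLinearMap
    refine Submodule.add_mem _ ?_ ?_
    · have h' := Submodule.mem_map_of_mem (f := E ∘ₗ LinearMap.inl ℂ (ι → ℂ) (ι → ℂ)) h₁
      rw [Submodule.map_span] at h'
      refine Submodule.span_mono ?_ h'
      rintro _ ⟨_, ⟨p, hp, rfl⟩, rfl⟩
      refine ⟨rename Sum.inl p, fun a ha b _ => ?_, (polyGrad_rename_inl p x ξ).symm⟩
      simpa [eval_rename] using hp a ha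
    · have h' := Submodule.mem_map_of_mem (f := E ∘ₗ LinearMap.inr ℂ (ι → ℂ) (ι → ℂ)) h₂
      rw [Submodule.map_span] at h'
      refine Submodule.span_mono ?_ h'
      rintro _ ⟨_, ⟨q, hq, rfl⟩, rfl⟩
      refine ⟨rename Sum.inr q, fun a _ b hb => ?_, (polyGrad_rename_inr q x ξ).symm⟩
      simpa [eval_rename] using hq b hb
end

section
/- Let n ≥ 2 and 0 ≤ k ≤ n. The closure, in the space of n × n complex matrices, of the set {A : Aᵀ = A and rank A = k} equals {A : Aᵀ = A and rank A ≤ k}. Equivalently, within the (closed) linear subspace of symmetric matrices, the closure of the rank-k stratum is the locus of rank at most k. -/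
open Matrix

/-!
The rank is lower semicontinuous and transposition is continuous, so the right-hand side is closed;
this gives one inclusion (`isClosed_rank_le`).

Conversely, a symmetric complex matrix is congruent to a diagonal one, `A = Pᵀ D P` with `P`
invertible (`exists_eq_transpose_mul_diagonal_mul`). The rank of `A` is the number of nonzero
diagonal entries of `D`, and if it is at most `k ≤ n`, then replacing suitably many zero diagonal
entries of `D` by `t ≠ 0` gives symmetric matrices of rank exactly `k`, which tend to `A` as
`t → 0`.
-/

theorem isClosed_rank_le (n k : ℕ) :
    IsClosed {A : Matrix (Fin n) (Fin n) ℂ | A.rank ≤ k} := by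
  let φ : Matrix (Fin n) (Fin n) ℂ →ₗ[ℂ] ((Fin n → ℂ) →L[ℂ] (Fin n → ℂ)) :=
    LinearMap.toContinuousLinearMap.toLinearMap ∘ₗ Matrix.toLin'.toLinearMap
  have hφ : Continuous φ := φ.continuous_of_finiteDimensional
  have ho := (isOpen_setOfPred_nat_le_rank (𝕜 := ℂ) (E := Fin n → ℂ) (F := Fin n → ℂ)
    (k + 1)).preimage hφ
  rw [← isOpen_compl_iff]
  convert ho using 1
  ext A
  have h : ((φ A : (Fin n → ℂ) →L[ℂ] (Fin n → ℂ)) : (Fin n → ℂ) →ₗ[ℂ] (Fin n → ℂ)).rank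
      = (A.rank : Cardinal) := by
    rw [Matrix.rank, LinearMap.rank, Module.finrank_eq_rank]
    rfl
  simp only [Set.mem_compl_iff, Set.mem_ofPred_eq, Set.mem_preimage, h, Nat.cast_le]
  omega

/-- Every symmetric complex matrix is congruent to a diagonal matrix: the bilinear form it defines
has an orthogonal basis. -/
theorem exists_eq_transpose_mul_diagonal_mul {n : ℕ} (A : Matrix (Fin n) (Fin n) ℂ)
    (hA : Aᵀ = A) :
    ∃ (P : Matrix (Fin n) (Fin n) ℂ) (d : Fin n → ℂ), IsUnit P.det ∧
      A = Pᵀ * diagonal d * P := by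
  let b := Pi.basisFun ℂ (Fin n)
  let B := Matrix.toBilin b A
  have hB : B.IsSymm := (Matrix.isSymm_toBilin_iff_isSymm b).2 hA
  have : Invertible (2 : ℂ) := invertibleOfNonzero two_ne_zero
  obtain ⟨v, hv⟩ := LinearMap.BilinForm.exists_orthogonal_basis (B := B) ⟨hB.eq⟩
  let c := v.reindex (finCongr (Module.finrank_fin_fun ℂ (n := n)))
  have hc : LinearMap.BilinForm.toMatrix c B = diagonal fun i => B (c i) (c i) := by
    ext i j
    rw [LinearMap.BilinForm.toMatrix_apply]
    by_cases hij : i = j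
    · subst hij
      simp
    · rw [diagonal_apply_ne _ hij]
      simp only [c, Module.Basis.reindex_apply]
      exact LinearMap.isOrthoᵢ_def.1 hv _ _ fun h => hij (Equiv.injective _ h)
  refine ⟨c.toMatrix b, fun i => B (c i) (c i), ?_, ?_⟩
  · exact isUnit_det_of_left_inverse (b.toMatrix_mul_toMatrix_flip c)
  · rw [← hc, LinearMap.BilinForm.toMatrix_mul_basis_toMatrix]
    exact (LinearMap.BilinForm.toMatrix_toBilin b A).symm

theorem rank_transpose_mul_diagonal_mul {n : ℕ} {P : Matrix (Fin n) (Fin n) ℂ}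
    (hP : IsUnit P.det) (d : Fin n → ℂ) :
    (Pᵀ * diagonal d * P).rank = (Finset.univ.filter fun i => d i ≠ 0).card := by
  rw [rank_mul_eq_left_of_isUnit_det _ _ hP,
    rank_mul_eq_right_of_isUnit_det _ _ (by rwa [det_transpose]), rank_diagonal,
    Fintype.card_subtype]

/-- For `n ≥ 2` and `0 ≤ k ≤ n`, the closure in the space of `n × n` complex matrices of
the set of symmetric matrices of rank exactly `k` is the set of symmetric matrices of
rank at most `k`. -/
theorem stmt15 (n k : ℕ) (hn : 2 ≤ n) (hk : k ≤ n) :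
    closure {A : Matrix (Fin n) (Fin n) ℂ | Aᵀ = A ∧ A.rank = k} =
      {A : Matrix (Fin n) (Fin n) ℂ | Aᵀ = A ∧ A.rank ≤ k} := by
  apply Set.Subset.antisymm
  · refine closure_minimal (fun A hA => ⟨hA.1, hA.2.le⟩) ?_
    exact (isClosed_eq (by fun_prop) continuous_id).inter (isClosed_rank_le n k)
  · rintro A ⟨hA, hr⟩
    obtain ⟨P, d, hP, rfl⟩ := exists_eq_transpose_mul_diagonal_mul A hA
    rw [rank_transpose_mul_diagonal_mul hP] at hr
    -- `S` is the support wanted for the perturbed diagonal.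
    obtain ⟨S, hS, hcard⟩ := Finset.exists_superset_card_eq hr (by simpa using hk)
    let w : ℂ → Fin n → ℂ := fun t i => d i + if i ∈ S ∧ d i = 0 then t else 0
    let f : ℂ → Matrix (Fin n) (Fin n) ℂ := fun t => Pᵀ * diagonal (w t) * P
    have hw : Continuous w := by
      refine continuous_pi fun i => ?_
      simp only [w]
      split_ifs <;> fun_prop
    have hf : Continuous f := by fun_prop
    have hf0 : f 0 = Pᵀ * diagonal d * P := by simp [f, w]
    rw [← hf0]
    refine mem_closure_of_tendsto (b := nhdsWithin 0 {0}ᶜ)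
      (hf.continuousAt.tendsto.mono_left nhdsWithin_le_nhds) ?_
    filter_upwards [self_mem_nhdsWithin] with t ht
    refine ⟨by simp [f, Matrix.mul_assoc], ?_⟩
    have hsupp : (Finset.univ.filter fun i => w t i ≠ 0) = S := by
      ext i
      have hi : d i ≠ 0 → i ∈ S := fun h => hS (by simpa using h)
      have ht' : t ≠ 0 := ht
      by_cases h0 : d i = 0 <;> by_cases hiS : i ∈ S <;> simp_all [w]
    rw [rank_transpose_mul_diagonal_mul hP, hsupp, hcard]
end

section
/- Let n ≥ 2 and 0 ≤ 2k ≤ n. The closure, in the space of n × n complex matrices, of the set {A : Aᵀ = −A and rank A = 2k} equals {A : Aᵀ = −A and rank A ≤ 2k}. Equivalently, within the (closed) linear subspace of skew-symmetric matrices, the closure of the rank-2k stratum is the locus of rank at most 2k. -/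
/-!
The rank is lower semicontinuous and skew-symmetry is a closed condition, which gives one
inclusion. For the other, let `A` be skew-symmetric of rank at most `2k`. The column space of `A`
lies in a subspace of dimension `2k`; a basis of that subspace, as the columns of an `n × 2k`
matrix `P`, has a left inverse `Q`, and `P Q A = A` (`exists_factor`). Transposing and using
skew-symmetry, `A = P S Pᵀ` where `S = Q A Qᵀ` is a skew-symmetric `2k × 2k` matrix. With `J` the
standard symplectic matrix, `det (t J + S)` is a nonzero polynomial in `t`, so `t J + S` is
invertible for `t` arbitrarily close to `0`, and `P (t J + S) Pᵀ` is then a skew-symmetric matrix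
of rank exactly `2k` close to `A`. In particular the parity of `rank A` plays no role.
-/

open Matrix

namespace SkewClosure

open Filter Topology

theorem isClosed_rank_le (n r : ℕ) :
    IsClosed {A : Matrix (Fin n) (Fin n) ℂ | A.rank ≤ r} := by
  let φ : Matrix (Fin n) (Fin n) ℂ →ₗ[ℂ] ((Fin n → ℂ) →L[ℂ] (Fin n → ℂ)) :=
    LinearMap.toContinuousLinearMap.toLinearMap ∘ₗ
      (Matrix.toLin' (R := ℂ) (m := Fin n) (n := Fin n)).toLinearMap
  have hφ : Continuous φ := φ.continuous_of_finiteDimensional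
  have ho := (isOpen_setOfPred_nat_le_rank (𝕜 := ℂ) (E := Fin n → ℂ) (F := Fin n → ℂ)
    (r + 1)).preimage hφ
  rw [← isOpen_compl_iff]
  convert ho using 1
  ext A
  have hr : ((φ A : (Fin n → ℂ) →L[ℂ] (Fin n → ℂ)) : (Fin n → ℂ) →ₗ[ℂ] (Fin n → ℂ)).rank
      = (A.rank : Cardinal) := by
    rw [Matrix.rank, Module.finrank_eq_rank]
    rfl
  simp only [Set.mem_compl_iff, Set.mem_ofPred_eq, Set.mem_preimage, hr, not_le]
  rw [Nat.cast_le, Nat.succ_le_iff]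

/-- The columns of `P` are a basis of a subspace containing the column space of `A`, and `P * Q`
is a projection onto that subspace. -/
theorem exists_factor {n k : ℕ} (hk : 2 * k ≤ n) (A : Matrix (Fin n) (Fin n) ℂ)
    (hA : A.rank ≤ 2 * k) :
    ∃ (P : Matrix (Fin n) (Fin k ⊕ Fin k) ℂ) (Q : Matrix (Fin k ⊕ Fin k) (Fin n) ℂ),
      Q * P = 1 ∧ P * (Q * A) = A := by
  obtain ⟨V, U, e, hV, hU, hN⟩ := exists_rank_normal_form A
  have hVd := (isUnit_iff_isUnit_det _).1 hV
  have hUd := (isUnit_iff_isUnit_det _).1 hU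
  -- `T` indexes the rows of `V * A` that may be nonzero; it is enlarged to a set `T'` of
  -- size `2k`, and `P`, `Q` are the columns of `V⁻¹` and the rows of `V` indexed by `T'`.
  let T : Finset (Fin n) := Finset.univ.image fun a : Fin A.rank => e.symm (Sum.inl a)
  have hT : T.card ≤ 2 * k := by
    refine Finset.card_image_le.trans ?_
    simpa using hA
  obtain ⟨T', hTT', -, hT'⟩ := Finset.exists_subsuperset_card_eq (Finset.subset_univ T) hT
    (by simpa using hk)
  have hcard : Fintype.card (Fin k ⊕ Fin k) = Fintype.card T' := by
    simp [hT', two_mul]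
  let E : Fin k ⊕ Fin k ≃ T' := Fintype.equivOfCardEq hcard
  let g : Fin k ⊕ Fin k → Fin n := fun a => E a
  have hg : Function.Injective g := Subtype.val_injective.comp E.injective
  have hVA : V * A = (fromBlocks 1 0 0 0).submatrix e e * U⁻¹ := by
    rw [← hN, Matrix.mul_nonsing_inv_cancel_right _ _ hUd]
  have hrow : ∀ i ∉ Set.range g, ∀ j, (V * A) i j = 0 := by
    intro i hi j
    rw [hVA, Matrix.mul_apply]
    refine Finset.sum_eq_zero fun x _ => ?_
    rcases hei : e i with a | b
    · refine absurd ?_ hi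
      have hmem : i ∈ T' := hTT' (Finset.mem_image.2 ⟨a, Finset.mem_univ _, by simp [← hei]⟩)
      exact ⟨E.symm ⟨i, hmem⟩, by simp [g]⟩
    · rcases hex : e x with c | d <;> simp [hei, hex]
  refine ⟨V⁻¹.submatrix id g, V.submatrix g id, ?_, ?_⟩
  · rw [← Matrix.submatrix_mul _ _ g id g Function.bijective_id, Matrix.mul_nonsing_inv _ hVd,
      Matrix.submatrix_one _ hg]
  · conv_rhs => rw [← Matrix.nonsing_inv_mul_cancel_left V A hVd]
    ext i j
    rw [Matrix.mul_apply, Matrix.mul_apply]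
    refine Fintype.sum_of_injective g hg _ _ (fun x hx => by rw [hrow x hx j, mul_zero]) ?_
    intro a
    simp [Matrix.mul_apply]

theorem mem_closure_of_rank_le {n k : ℕ} (hk : 2 * k ≤ n) (A : Matrix (Fin n) (Fin n) ℂ)
    (hs : Aᵀ = -A) (hA : A.rank ≤ 2 * k) :
    A ∈ closure {A : Matrix (Fin n) (Fin n) ℂ | Aᵀ = -A ∧ A.rank = 2 * k} := by
  obtain ⟨P, Q, hQP, hPQ⟩ := exists_factor hk A hA
  have hPQ' : A * Qᵀ * Pᵀ = A := by
    have h := congrArg Matrix.transpose hPQ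
    simpa [Matrix.transpose_mul, hs] using h
  let S := Q * A * Qᵀ
  let J := Matrix.J (Fin k) ℂ
  have hSs : Sᵀ = -S := by simp [S, Matrix.transpose_mul, hs, Matrix.mul_assoc]
  have hJs : Jᵀ = -J := Matrix.J_transpose _ _
  have hS : P * S * Pᵀ = A := by
    calc P * S * Pᵀ = P * (Q * (A * Qᵀ * Pᵀ)) := by simp only [S, Matrix.mul_assoc]
      _ = A := by rw [hPQ', hPQ]
  let F : ℂ → Matrix (Fin n) (Fin n) ℂ := fun t => P * (t • J + S) * Pᵀ
  have hF : Continuous F := by fun_prop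
  have hF0 : F 0 = A := by simp [F, hS]
  let p : Polynomial ℂ :=
    det ((Polynomial.X : Polynomial ℂ) • J.map Polynomial.C + S.map Polynomial.C)
  -- The coefficient of `p` in degree `2k` is `det J`.
  have hp : p ≠ 0 := by
    intro h
    have hc := Polynomial.coeff_det_X_add_C_card J S
    change p.coeff _ = _ at hc
    rw [h, Polynomial.coeff_zero] at hc
    exact (Matrix.isUnit_det_J (Fin k) ℂ).ne_zero hc.symm
  have hpe : ∀ t, p.eval t = det (t • J + S) := by
    intro t
    simp only [p]
    rw [← Polynomial.coe_evalRingHom, RingHom.map_det]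
    congr 1
    ext i j
    simp
    ring
  have hev : ∀ᶠ t in 𝓝[≠] (0 : ℂ), det (t • J + S) ≠ 0 := by
    have hfin : {t : ℂ | p.IsRoot t}.Finite := Polynomial.finite_setOfPred_isRoot hp
    -- The finite set of roots other than `0` is closed and misses `0`.
    have h2 : ∀ᶠ t in 𝓝[≠] (0 : ℂ), t ∉ {t : ℂ | p.IsRoot t} \ {0} := by
      refine eventually_nhdsWithin_of_eventually_nhds ?_
      exact (hfin.sdiff).isClosed.isOpen_compl.mem_nhds (by simp)
    filter_upwards [h2, self_mem_nhdsWithin] with t ht ht0 hdet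
    exact ht ⟨by simpa [Polynomial.IsRoot, hpe] using hdet, ht0⟩
  have hlim : Tendsto F (𝓝[≠] 0) (𝓝 A) := by
    rw [← hF0]
    exact hF.continuousAt.tendsto.mono_left nhdsWithin_le_nhds
  refine mem_closure_of_tendsto hlim (hev.mono fun t ht => ⟨?_, ?_⟩)
  · simp only [F, Matrix.transpose_mul, Matrix.transpose_add, Matrix.transpose_smul, hJs, hSs,
      Matrix.transpose_transpose]
    rw [smul_neg, ← neg_add, Matrix.neg_mul, Matrix.mul_neg, Matrix.mul_assoc]
  · have hcard : Fintype.card (Fin k ⊕ Fin k) = 2 * k := by simp [two_mul]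
    apply le_antisymm
    · calc (F t).rank ≤ (P * (t • J + S)).rank := Matrix.rank_mul_le_left _ _
        _ ≤ _ := Matrix.rank_le_card_width _
        _ = 2 * k := hcard
    · have hQF : Q * F t * Qᵀ = t • J + S := by
        have h1 : Pᵀ * Qᵀ = 1 := by rw [← Matrix.transpose_mul, hQP, Matrix.transpose_one]
        calc Q * F t * Qᵀ = (Q * P) * (t • J + S) * (Pᵀ * Qᵀ) := by
              simp only [F, Matrix.mul_assoc]
          _ = _ := by rw [hQP, h1, Matrix.one_mul, Matrix.mul_one]
      calc 2 * k = (t • J + S).rank := by rw [Matrix.rank_of_det_ne_zero ht, hcard]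
        _ = (Q * F t * Qᵀ).rank := by rw [hQF]
        _ ≤ (Q * F t).rank := Matrix.rank_mul_le_left _ _
        _ ≤ (F t).rank := Matrix.rank_mul_le_right _ _

end SkewClosure

/-- For `n ≥ 2` and `0 ≤ 2k ≤ n`, the closure in the space of `n × n` complex matrices of
the set of skew-symmetric matrices of rank exactly `2k` is the set of skew-symmetric
matrices of rank at most `2k`. -/
theorem stmt16 (n k : ℕ) (hn : 2 ≤ n) (hk : 2 * k ≤ n) :
    closure {A : Matrix (Fin n) (Fin n) ℂ | Aᵀ = -A ∧ A.rank = 2 * k} =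
      {A : Matrix (Fin n) (Fin n) ℂ | Aᵀ = -A ∧ A.rank ≤ 2 * k} := by
  apply Set.Subset.antisymm
  · refine closure_minimal (fun A hA => ⟨hA.1, hA.2.le⟩) ?_
    refine IsClosed.inter ?_ (SkewClosure.isClosed_rank_le n (2 * k))
    exact isClosed_eq (by fun_prop) (by fun_prop)
  · rintro A ⟨hs, hA⟩
    exact SkewClosure.mem_closure_of_rank_le hk A hs hA
end
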